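/- Let K be a field with char K ≠ 2, V a K-vector space, and ξ a nondegenerate alternating bilinear form on V, with H_ξ = { ⟨u⟩ + ⟨v⟩ : u, v ∈ V∖{0}, ξ(u,v) = 0 } the corresponding hyperplane of V₂(ℙ(V)). Then: (1) H_ξ is spiky — for every point e ∈ H_ξ there is a block L of V₂(ℙ(V)) with L ∩ H_ξ = {e}; (2) H_ξ is not flappy — for every projective line L₀ of ℙ(V), the block 2L₀ = {2x : x ∈ L₀} is contained in H_ξ, and every strong subspace of V₂(ℙ(V)) containing 2L₀ is contained in the leaf 2S = {2x : x a point of ℙ(V)} ⊆ H_ξ. -/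

import Mathlib

def veroBlock {S : Type*} (e : Multiset S) (r : ℕ) (B : Set S) : Set (Multiset S) :=
  { m | ∃ x ∈ B, m = e + Multiset.replicate r x }

def veroBlocks {S : Type*} (k : ℕ) (L : Set (Set S)) : Set (Set (Multiset S)) :=
  { Bl | ∃ (r : ℕ) (e : Multiset S) (B : Set S),
      0 < r ∧ r ≤ k ∧ Multiset.card e = k - r ∧ B ∈ L ∧ Bl = veroBlock e r B }

def veroPoints (S : Type*) (k : ℕ) : Set (Multiset S) :=
  { m | Multiset.card m = k }

def veroLeaves (S : Type*) (k : ℕ) : Set (Set (Multiset S)) :=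
  { T | ∃ (r : ℕ) (e : Multiset S),
      0 < r ∧ r ≤ k ∧ Multiset.card e = k - r ∧ T = veroBlock e r Set.univ }

def VerAdj {S : Type*} (k : ℕ) (L : Set (Set S)) (f g : Multiset S) : Prop :=
  ∃ Bl ∈ veroBlocks k L, f ∈ Bl ∧ g ∈ Bl

def AtLeastThree {α : Type*} (B : Set α) : Prop :=
  ∃ a b c, a ∈ B ∧ b ∈ B ∧ c ∈ B ∧ a ≠ b ∧ a ≠ c ∧ b ≠ c

def IsPLS {α : Type*} (L : Set (Set α)) : Prop :=
  L.Nonempty ∧ (∀ B ∈ L, AtLeastThree B) ∧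
    ∀ p q : α, p ≠ q → ∀ B₁ ∈ L, ∀ B₂ ∈ L,
      p ∈ B₁ → q ∈ B₁ → p ∈ B₂ → q ∈ B₂ → B₁ = B₂

def IsLinearSpace {α : Type*} (L : Set (Set α)) : Prop :=
  IsPLS L ∧ ∀ p q : α, p ≠ q → ∃ B ∈ L, p ∈ B ∧ q ∈ B

def IsSubspace {α : Type*} (Blk : Set (Set α)) (X : Set α) : Prop :=
  ∀ B ∈ Blk, (∃ p ∈ B ∩ X, ∃ q ∈ B ∩ X, p ≠ q) → B ⊆ X

def IsHyperplane {α : Type*} (L : Set (Set α)) (X : Set α) : Prop :=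
  IsSubspace L X ∧ (∀ B ∈ L, (B ∩ X).Nonempty) ∧ X ≠ Set.univ

def Veblenian {α : Type*} (L : Set (Set α)) : Prop :=
  ∀ (p : α) (L₁ L₂ M₁ M₂ : Set α), L₁ ∈ L → L₂ ∈ L → M₁ ∈ L → M₂ ∈ L →
    L₁ ≠ L₂ → L₁ ≠ M₁ → L₁ ≠ M₂ → L₂ ≠ M₁ → L₂ ≠ M₂ → M₁ ≠ M₂ →
    p ∈ L₁ → p ∈ L₂ → p ∉ M₁ → p ∉ M₂ →
    (L₁ ∩ M₁).Nonempty → (L₁ ∩ M₂).Nonempty →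
    (L₂ ∩ M₁).Nonempty → (L₂ ∩ M₂).Nonempty →
    (M₁ ∩ M₂).Nonempty

def IsVeroHyperplane {S : Type*} (k : ℕ) (L : Set (Set S)) (X : Set (Multiset S)) : Prop :=
  X ⊆ veroPoints S k ∧ X ≠ veroPoints S k ∧
    IsSubspace (veroBlocks k L) X ∧ ∀ B ∈ veroBlocks k L, (B ∩ X).Nonempty

def addPt {S : Type*} (a : S) (m : Set S) : Set (Multiset S) :=
  { t | ∃ x ∈ m, t = ({a, x} : Multiset S) }

def dbl {S : Type*} (m : Set S) : Set (Multiset S) :=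
  { t | ∃ x ∈ m, t = ({x, x} : Multiset S) }

def projLines (K V : Type*) [Field K] [AddCommGroup V] [Module K V] :
    Set (Set (Projectivization K V)) :=
  { L | ∃ W : Submodule K V, Module.finrank K ↥W = 2 ∧
      L = { p : Projectivization K V | p.submodule ≤ W } }

def Hxi {K V : Type*} [Field K] [AddCommGroup V] [Module K V]
    (ξ : V →ₗ[K] V →ₗ[K] K) : Set (Multiset (Projectivization K V)) :=
  { m | ∃ (u v : V) (hu : u ≠ 0) (hv : v ≠ 0), ξ u v = 0 ∧
      m = ({Projectivization.mk K u hu, Projectivization.mk K v hv} :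
        Multiset (Projectivization K V)) }

theorem hxi_iff_aux {K V : Type*} [Field K] [AddCommGroup V] [Module K V]
    (ξ : V →ₗ[K] V →ₗ[K] K) (halt : ∀ u : V, ξ u u = 0) (u v : V) (hu : u ≠ 0) (hv : v ≠ 0) :
    ({Projectivization.mk K u hu, Projectivization.mk K v hv} :
      Multiset (Projectivization K V)) ∈ Hxi ξ ↔ ξ u v = 0 := by
  have hA : ∀ x y, ξ x y = 0 → ξ y x = 0 := by
    intro x y h
    have := halt (x + y)
    simp [halt, h] at this
    exact this
  constructor
  · rintro ⟨u', v', hu', hv', h, he⟩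
    have key : ∀ (a b c d : V) (ha : a ≠ 0) (hb : b ≠ 0) (hc : c ≠ 0) (hd : d ≠ 0),
        Projectivization.mk K a ha = Projectivization.mk K c hc →
        Projectivization.mk K b hb = Projectivization.mk K d hd → ξ c d = 0 → ξ a b = 0 := by
      intro a b c d ha hb hc hd h1 h2 h3
      obtain ⟨s, rfl⟩ := (Projectivization.mk_eq_mk_iff' K _ _ _ _).1 h1
      obtain ⟨t, rfl⟩ := (Projectivization.mk_eq_mk_iff' K _ _ _ _).1 h2
      simp [h3]
    simp only [Multiset.insert_eq_cons] at he
    rw [Multiset.cons_eq_cons] at he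
    rcases he with ⟨h1, h2⟩ | ⟨_, cs, h1, h2⟩
    · exact key _ _ _ _ _ _ _ _ h1 (by simpa using h2) h
    · have h1' := congrArg Multiset.card h1
      have : cs = 0 := by simpa using h1'
      subst this
      simp at h1 h2
      exact key _ _ _ _ _ _ _ _ h2.symm h1 (hA _ _ h)
  · intro h
    exact ⟨u, v, hu, hv, h, rfl⟩

theorem adj_aux {S : Type*} (L : Set (Set S)) (a b p : S) (hab : a ≠ b)
    (h : VerAdj 2 L {a, b} {p, p}) : p = a ∨ p = b := by
  obtain ⟨_, ⟨r, e, B, hr, hr2, hc, hB, rfl⟩, ⟨x, hx, h1⟩, ⟨y, hy, h2⟩⟩ := h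
  interval_cases r
  · obtain ⟨c, rfl⟩ := Multiset.card_eq_one.1 hc
    have hc : c ∈ ({p, p} : Multiset S) := by rw [h2]; simp
    have hc' : c ∈ ({a, b} : Multiset S) := by rw [h1]; simp
    simp at hc hc'
    subst hc
    exact hc'
  · have : e = 0 := by simpa using hc
    subst this
    have ha : a ∈ ({a, b} : Multiset S) := by simp
    have hb : b ∈ ({a, b} : Multiset S) := by simp
    rw [h1] at ha hb
    rw [zero_add] at ha hb
    exact absurd ((Multiset.eq_of_mem_replicate ha).trans (Multiset.eq_of_mem_replicate hb).symm) hab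

theorem line_aux {K V : Type*} [Field K] [AddCommGroup V] [Module K V]
    (L₀ : Set (Projectivization K V)) (h : L₀ ∈ projLines K V) : AtLeastThree L₀ := by
  obtain ⟨W, hW, rfl⟩ := h
  have : Module.Finite K W := Module.finite_of_finrank_eq_succ hW
  let b := Module.finBasisOfFinrankEq K W hW
  have hli : LinearIndependent K (fun i => (b i : V)) :=
    b.linearIndependent.map' W.subtype (Submodule.ker_subtype W)
  have hp : LinearIndependent K ![(b 0 : V), (b 1 : V)] := by
    convert hli using 1
    ext i; fin_cases i <;> rfl
  rw [LinearIndependent.pair_iff] at hp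
  have hu : (b 0 : V) ≠ 0 := hli.ne_zero 0
  have hv : (b 1 : V) ≠ 0 := hli.ne_zero 1
  have huW : (b 0 : V) ∈ W := (b 0).2
  have hvW : (b 1 : V) ∈ W := (b 1).2
  generalize (b 0 : V) = u at *
  generalize (b 1 : V) = v at *
  have huv : u + v ≠ 0 := fun h => by
    have := hp 1 1 (by simpa using h)
    simp at this
  refine ⟨.mk K u hu, .mk K v hv, .mk K (u+v) huv, ?_, ?_, ?_, ?_, ?_, ?_⟩
  · simpa [Projectivization.submodule_mk] using huW
  · simpa [Projectivization.submodule_mk] using hvW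
  · simpa [Projectivization.submodule_mk] using W.add_mem huW hvW
  · intro h
    obtain ⟨t, ht⟩ := (Projectivization.mk_eq_mk_iff' K _ _ _ _).1 h
    have := hp (-1) t (by rw [← ht]; module)
    simp at this
  · intro h
    obtain ⟨t, ht⟩ := (Projectivization.mk_eq_mk_iff' K _ _ _ _).1 h
    have := hp (t-1) t (by rw [← sub_eq_zero.2 ht]; module)
    obtain ⟨h1, h2⟩ := this
    simp [h2] at h1
  · intro h
    obtain ⟨t, ht⟩ := (Projectivization.mk_eq_mk_iff' K _ _ _ _).1 h
    have := hp t (t-1) (by rw [← sub_eq_zero.2 ht]; module)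
    obtain ⟨h1, h2⟩ := this
    simp [h1] at h2

theorem stmt_13 {K V : Type*} [Field K] [AddCommGroup V] [Module K V]
    (hchar : (2 : K) ≠ 0)
    (ξ : V →ₗ[K] V →ₗ[K] K) (halt : ∀ u : V, ξ u u = 0)
    (hnd : ∀ u : V, (∀ v : V, ξ u v = 0) → u = 0) :
    (∀ e ∈ Hxi ξ, ∃ B ∈ veroBlocks 2 (projLines K V), B ∩ Hxi ξ = {e}) ∧
    ({ m : Multiset (Projectivization K V) | ∃ p : Projectivization K V,
        m = ({p, p} : Multiset (Projectivization K V)) } ⊆ Hxi ξ) ∧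
    (∀ L₀ ∈ projLines K V,
      ({ m : Multiset (Projectivization K V) |
          ∃ p ∈ L₀, m = ({p, p} : Multiset (Projectivization K V)) } ⊆ Hxi ξ) ∧
      (∀ X : Set (Multiset (Projectivization K V)),
        X ⊆ veroPoints (Projectivization K V) 2 →
        IsSubspace (veroBlocks 2 (projLines K V)) X →
        (∀ a ∈ X, ∀ b ∈ X, a ≠ b → VerAdj 2 (projLines K V) a b) →
        { m : Multiset (Projectivization K V) |
          ∃ p ∈ L₀, m = ({p, p} : Multiset (Projectivization K V)) } ⊆ X →
        X ⊆ { m : Multiset (Projectivization K V) | ∃ p : Projectivization K V,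
          m = ({p, p} : Multiset (Projectivization K V)) })) := by
  have hd : { m : Multiset (Projectivization K V) | ∃ p : Projectivization K V,
        m = ({p, p} : Multiset (Projectivization K V)) } ⊆ Hxi ξ := by
    rintro _ ⟨p, rfl⟩
    induction p using Projectivization.ind with
    | h v hv => exact ⟨v, v, hv, hv, halt v, rfl⟩
  refine ⟨?_, hd, ?_⟩
  · rintro _ ⟨u, v, hu, hv, h, rfl⟩
    obtain ⟨w, hw⟩ : ∃ w, ξ u w ≠ 0 := by
      by_contra! hh
      exact hu (hnd u hh)
    have hli : LinearIndependent K ![v, w] := by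
      rw [LinearIndependent.pair_iff]
      intro s t hst
      have h1 := congrArg (ξ u) hst
      have ht : t = 0 := by simpa [h, hw] using h1
      subst ht
      simpa [hv] using hst
    refine ⟨veroBlock {Projectivization.mk K u hu} 1
      {p | p.submodule ≤ Submodule.span K {v, w}},
      ⟨1, _, _, by norm_num, by norm_num, by simp, ⟨_, ?_, rfl⟩, rfl⟩, ?_⟩
    · have := finrank_span_eq_card hli
      rw [Matrix.range_cons_cons_empty] at this
      simpa using this
    · ext m
      constructor
      · rintro ⟨⟨x, hx, rfl⟩, hm⟩
        induction x using Projectivization.ind with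
        | h x hx0 =>
          have hm' := (hxi_iff_aux ξ halt u x hu hx0).1 (by simpa using hm)
          have hxm : x ∈ Submodule.span K {v, w} := by
            simpa [Projectivization.submodule_mk] using hx
          obtain ⟨s, t, rfl⟩ := Submodule.mem_span_pair.1 hxm
          have ht : t = 0 := by simpa [h, hw] using hm'
          subst ht
          have : Projectivization.mk K (s • v + (0:K) • w) hx0 = Projectivization.mk K v hv :=
            (Projectivization.mk_eq_mk_iff' K _ _ _ _).2 ⟨s, by simp⟩
          rw [this]
          rfl
      · rintro rfl
        refine ⟨⟨Projectivization.mk K v hv, ?_, rfl⟩, ⟨u, v, hu, hv, h, rfl⟩⟩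
        have : v ∈ Submodule.span K {v, w} := Submodule.subset_span (by simp)
        simpa [Projectivization.submodule_mk] using this
  · intro L₀ hL
    refine ⟨fun m ⟨p, _, hp⟩ => hd ⟨p, hp⟩, ?_⟩
    intro X hX _ hadj hsub m hm
    obtain ⟨a, b, rfl⟩ := Multiset.card_eq_two.1 (hX hm)
    by_cases hab : a = b
    · exact ⟨a, by rw [hab]⟩
    exfalso
    have key : ∀ p ∈ L₀, p = a ∨ p = b := by
      intro p hp
      by_cases he : ({a, b} : Multiset (Projectivization K V)) = {p, p}
      · left
        have : a ∈ ({a, b} : Multiset (Projectivization K V)) := by simp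
        rw [he] at this
        simp at this
        exact this.symm
      · exact adj_aux _ a b p hab (hadj _ hm _ (hsub ⟨p, hp, rfl⟩) he)
    obtain ⟨p, q, r, hp, hq, hr, h1, h2, h3⟩ := line_aux L₀ hL
    rcases key p hp with rfl | rfl <;> rcases key q hq with rfl | rfl <;>
      rcases key r hr with rfl | rfl <;> simp_all
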